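/- For each integer q ≥ 3 there exists a constant κ > 0 (depending only on q) such that for every a_0 ∈ ℤ and every infinite q-regular sequence (a_i)_{i≥1} with convergents p_n, q_n, the convergents converge to some x ∈ ℝ and |x − p_n/q_n| ≤ 1/(κ·q_n²) holds for all n ≥ 0. -/

import Mathlib

open Filter Topology

/-- `λ_q = 2 cos (π/q)`. -/
noncomputable def lamq (q : ℕ) : ℝ := 2 * Real.cos (Real.pi / q)

/-- `h_q = (q-2)/2` for even `q` and `(q-3)/2` for odd `q`. -/
def hQ (q : ℕ) : ℕ := if Even q then (q - 2) / 2 else (q - 3) / 2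

/-- Forbidden blocks for the nearest `λ_q`-multiple continued fractions.
For `ε ∈ {1,-1}`: the block `(ε)^{h_q+1}`; for even `q` the blocks `((ε)^{h_q}, ε·m)`, `m ≥ 1`;
for odd `q` (including `q = 3`, where `h_q = 0`) the blocks `((ε)^{h_q}, ε·2, (ε)^{h_q}, ε·m)`,
`m ≥ 1`. -/
def IsForbidden (q : ℕ) (L : List ℤ) : Prop :=
  ∃ ε : ℤ, (ε = 1 ∨ ε = -1) ∧
    (L = List.replicate (hQ q + 1) ε ∨
      (if Even q then
        ∃ m : ℤ, 1 ≤ m ∧ L = List.replicate (hQ q) ε ++ [ε * m]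
      else
        ∃ m : ℤ, 1 ≤ m ∧
          L = List.replicate (hQ q) ε ++ ε * 2 :: (List.replicate (hQ q) ε ++ [ε * m])))

/-- An infinite sequence is `q`-regular if no finite subblock is forbidden. -/
def RegularSeq (q : ℕ) (a : ℕ → ℤ) : Prop :=
  ∀ (l len : ℕ), ¬ IsForbidden q (List.ofFn fun j : Fin len => a (l + (j : ℕ)))

/-- An infinite sequence is dual `q`-regular if no reversed finite subblock is forbidden. -/
def DualRegularSeq (q : ℕ) (a : ℕ → ℤ) : Prop :=
  ∀ (l len : ℕ), ¬ IsForbidden q (List.ofFn fun j : Fin len => a (l + (j : ℕ))).reverse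

/-- A finite sequence is `q`-regular if no contiguous subblock is forbidden. -/
def RegularList (q : ℕ) (L : List ℤ) : Prop :=
  ∀ B : List ℤ, B <:+: L → ¬ IsForbidden q B

/-- Numerators of the convergents: `p₀ = a₀λ`, `p₁ = a₁λ·p₀ - 1`,
`pₙ = aₙλ·pₙ₋₁ - pₙ₋₂` (so that `p₋₁ = 1`, `p₋₂ = 0`).  Here `A n` is the digit `aₙ`. -/
noncomputable def cfP (lam : ℝ) (A : ℕ → ℤ) : ℕ → ℝ
  | 0 => (A 0 : ℝ) * lam
  | 1 => (A 1 : ℝ) * lam * ((A 0 : ℝ) * lam) - 1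
  | (n + 2) => (A (n + 2) : ℝ) * lam * cfP lam A (n + 1) - cfP lam A n

/-- Denominators of the convergents: `q₀ = 1`, `q₁ = a₁λ`,
`qₙ = aₙλ·qₙ₋₁ - qₙ₋₂` (so that `q₋₁ = 0`, `q₋₂ = -1`). -/
noncomputable def cfQ (lam : ℝ) (A : ℕ → ℤ) : ℕ → ℝ
  | 0 => 1
  | 1 => (A 1 : ℝ) * lam
  | (n + 2) => (A (n + 2) : ℝ) * lam * cfQ lam A (n + 1) - cfQ lam A n

/-- The λ-continued fraction with digit sequence `A` converges to `x`. -/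
def CFConvergesTo (lam : ℝ) (A : ℕ → ℤ) (x : ℝ) : Prop :=
  (∀ n, cfQ lam A n ≠ 0) ∧
    Filter.Tendsto (fun n => cfP lam A n / cfQ lam A n) Filter.atTop (nhds x)

/-- The value `p_L/q_L` of the finite continued fraction `[a₀; a₁, …, a_L]`. -/
noncomputable def cfValList (lam : ℝ) (a0 : ℤ) (L : List ℤ) : ℝ :=
  cfP lam (fun i => (a0 :: L).getD i 0) L.length /
    cfQ lam (fun i => (a0 :: L).getD i 0) L.length

/-- The last denominator `q_L` of the finite continued fraction `[a₀; a₁, …, a_L]`. -/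
noncomputable def cfDenList (lam : ℝ) (a0 : ℤ) (L : List ℤ) : ℝ :=
  cfQ lam (fun i => (a0 :: L).getD i 0) L.length

/-- The modified floor: `⌊t⌋* = ⌈t⌉ - 1` for `t > 0` and `⌊t⌋* = ⌊t⌋` for `t ≤ 0`. -/
noncomputable def floorstar (t : ℝ) : ℤ := if 0 < t then ⌈t⌉ - 1 else ⌊t⌋

/-- The nearest `λ`-multiple: `⟨y⟩ = ⌊y/λ + 1/2⌋*`. -/
noncomputable def nearestLam (lam : ℝ) (x : ℝ) : ℤ := floorstar (x / lam + 1 / 2)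

/-- The interval map `f_q` on `I_q = [-λ/2, λ/2]`. -/
noncomputable def fq (lam : ℝ) (x : ℝ) : ℝ :=
  if x = 0 then 0 else -1 / x - (nearestLam lam (-1 / x) : ℝ) * lam

/-- `R_q`: equal to `1` for even `q`, and the positive root of `R² + (2-λ_q)R = 1` for odd `q`. -/
noncomputable def Rq (q : ℕ) : ℝ :=
  if Even q then 1 else (lamq q - 2 + Real.sqrt ((2 - lamq q) ^ 2 + 4)) / 2

/-- `r_q = R_q - λ_q`. -/
noncomputable def rq (q : ℕ) : ℝ := Rq q - lamq q

/-- The map `⟨·⟩*` used by the dual algorithm. -/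
noncomputable def nearestDual (lam R y : ℝ) : ℤ :=
  if 0 ≤ y then floorstar (y / lam + 1 - R / lam) else floorstar (y / lam + R / lam)

/-- The dual interval map `f_q^*` on `I_{R_q} = [-R_q, R_q]`. -/
noncomputable def fqstar (lam R : ℝ) (x : ℝ) : ℝ :=
  if x = 0 then 0 else -1 / x - (nearestDual lam R (-1 / x) : ℝ) * lam

/-- The matrix `S = [[0,-1],[1,0]]` as an element of `SL(2,ℝ)`. -/
noncomputable def matS : Matrix.SpecialLinearGroup (Fin 2) ℝ :=
  ⟨!![0, -1; 1, 0], by norm_num [Matrix.det_fin_two_of]⟩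

/-- The matrix `T = [[1,λ],[0,1]]` as an element of `SL(2,ℝ)`. -/
noncomputable def matT (lam : ℝ) : Matrix.SpecialLinearGroup (Fin 2) ℝ :=
  ⟨!![1, lam; 0, 1], by norm_num [Matrix.det_fin_two_of]⟩

/-- The Hecke triangle group `G_q`, the subgroup of `SL(2,ℝ)` generated by `S` and `T_q`. -/
noncomputable def Hecke (q : ℕ) : Subgroup (Matrix.SpecialLinearGroup (Fin 2) ℝ) :=
  Subgroup.closure {matS, matT (lamq q)}

/-- The Möbius action of `g` on `x ∈ ℝ`. -/
noncomputable def moeb (g : Matrix.SpecialLinearGroup (Fin 2) ℝ) (x : ℝ) : ℝ :=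
  (g.val 0 0 * x + g.val 0 1) / (g.val 1 0 * x + g.val 1 1)

/-- `x` and `y` are `G_q`-equivalent. -/
def GqEquiv (q : ℕ) (x y : ℝ) : Prop :=
  ∃ g ∈ Hecke q, (g.val 1 0 * x + g.val 1 1 ≠ 0) ∧ moeb g x = y

/-- Two sequences have a common tail. -/
def CommonTail (a b : ℕ → ℤ) : Prop := ∃ m n : ℕ, ∀ k : ℕ, a (m + k) = b (n + k)

/-- The period block of `ρ_q`: `(3)` for `q = 3`, `((1)^{h_q-1}, 2)` for even `q`
and `((1)^{h_q}, 2, (1)^{h_q-1}, 2)` for odd `q ≥ 5`. -/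
def rhoBlock (q : ℕ) : List ℤ :=
  if q = 3 then [3]
  else if Even q then List.replicate (hQ q - 1) 1 ++ [2]
  else List.replicate (hQ q) 1 ++ 2 :: (List.replicate (hQ q - 1) 1 ++ [2])

/-- The periodic sequence `ρ_q`. -/
def rho (q : ℕ) (i : ℕ) : ℤ := (rhoBlock q).getD (i % (rhoBlock q).length) 0

/-- `x` has the infinite regular `λ_q`-CF with digit sequence `A` (with `A 0 = a₀`). -/
def HasRegCF (q : ℕ) (x : ℝ) (A : ℕ → ℤ) : Prop :=
  (∀ i, A (i + 1) ≠ 0) ∧ RegularSeq q (fun i => A (i + 1)) ∧ CFConvergesTo (lamq q) A x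

/-- `x` has the infinite dual regular `λ_q`-CF with digit sequence `A` (with `A 0 = a₀`). -/
def HasDualRegCF (q : ℕ) (x : ℝ) (A : ℕ → ℤ) : Prop :=
  (∀ i, A (i + 1) ≠ 0) ∧ DualRegularSeq q (fun i => A (i + 1)) ∧ CFConvergesTo (lamq q) A x

/-- The digits of `x` produced by the algorithm for `f_q`: `a_{i+1} = ⟨-1 / f_q^i(x)⟩`. -/
noncomputable def digitSeq (lam : ℝ) (x : ℝ) : ℕ → ℤ :=
  fun i => nearestLam lam (-1 / (fq lam)^[i] x)

/-- The digits of `x` produced by the algorithm for `f_q^*`: `b_{i+1} = ⟨-1 / (f_q^*)^i(x)⟩*`. -/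
noncomputable def digitSeqStar (lam R : ℝ) (x : ℝ) : ℕ → ℤ :=
  fun i => nearestDual lam R (-1 / (fqstar lam R)^[i] x)

/-!
Write `λ = λ_q`. The ratios `r_n = q_{n-1} / q_n` obey `r_{n+1} = 1 / (a_{n+1} λ - r_n)`. A digit
`1` acts on them by an elliptic map of order `q`, and in the coordinate
`r = sin (uπ/q) / sin ((u+1)π/q)` this map is the shift `u ↦ u + 1`. A digit that is not `1` or that
changes the sign resets `u` to a small value, and the forbidden blocks are what prevents `u` from
passing the value `q/2 - 1/2` at which `r = 1`. Hence `|q_n| ≤ |q_{n+1}|`. A digit of the same sign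
as `r` can only follow while `u ≤ q/2 - 1`, that is `|r| ≤ λ/2 < 1`, and a digit of the opposite
sign increases `|q_n|` by itself; this gives `|q_n| ≤ (λ/2) |q_{n+2}|`. The distances
`1 / |q_n q_{n+1}|` between consecutive convergents are therefore dominated by `1 / q_n²`, which
contracts by `λ/2` every two steps.
-/

section Convergence

theorem exists_tendsto_dist_le_of_dist_le_sub {α : Type*} [PseudoMetricSpace α] [CompleteSpace α]
    {x : ℕ → α} {V : ℕ → ℝ} (hV : ∀ n, 0 ≤ V n)
    (hx : ∀ n, dist (x n) (x (n + 1)) ≤ V n - V (n + 1)) :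
    ∃ y, Tendsto x atTop (𝓝 y) ∧ ∀ n, dist (x n) y ≤ V n := by
  have hnonneg : ∀ n, 0 ≤ V n - V (n + 1) := fun n => dist_nonneg.trans (hx n)
  have hsum : ∀ n N, ∑ m ∈ Finset.range N, (V (n + m) - V (n + m + 1)) ≤ V n := fun n N => by
    have htelescope := Finset.sum_range_sub' (fun m => V (n + m)) N
    simp only [← add_assoc, add_zero] at htelescope
    linarith [hV (n + N)]
  have hsummable : Summable fun m => V m - V (m + 1) :=
    summable_of_sum_range_le (c := V 0) hnonneg fun N => by simpa only [zero_add] using hsum 0 N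
  obtain ⟨y, hy⟩ := cauchySeq_tendsto_of_complete (cauchySeq_of_dist_le_of_summable _ hx hsummable)
  exact ⟨y, hy, fun n => (dist_le_tsum_of_dist_le_of_tendsto _ hx hsummable hy n).trans
    (Real.tsum_le_of_sum_range_le (fun m => hnonneg (n + m)) (hsum n))⟩

theorem exists_tendsto_dist_le_of_add_two_le_mul {α : Type*} [PseudoMetricSpace α]
    [CompleteSpace α] {x : ℕ → α} {e : ℕ → ℝ} {c : ℝ} (hc : c < 1) (he : ∀ n, e (n + 2) ≤ c * e n)
    (hx : ∀ n, dist (x n) (x (n + 1)) ≤ e n) :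
    ∃ y, Tendsto x atTop (𝓝 y) ∧ ∀ n, dist (x n) y ≤ (e n + e (n + 1)) / (1 - c) := by
  have hc' : 0 < 1 - c := sub_pos.2 hc
  have he0 : ∀ n, 0 ≤ e n := fun n => dist_nonneg.trans (hx n)
  refine exists_tendsto_dist_le_of_dist_le_sub
    (fun n => div_nonneg (add_nonneg (he0 n) (he0 (n + 1))) hc'.le) fun n => (hx n).trans ?_
  rw [← sub_div, le_div_iff₀ hc']
  linarith [he n]

variable {lam c : ℝ} {A : ℕ → ℤ}

theorem cfP_mul_cfQ_sub (lam : ℝ) (A : ℕ → ℤ) (n : ℕ) :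
    cfP lam A (n + 1) * cfQ lam A n - cfP lam A n * cfQ lam A (n + 1) = -1 := by
  induction n with
  | zero => simp only [cfP, cfQ]; ring
  | succ n ih => rw [cfP, cfQ]; linarith

theorem dist_convergents_succ (hQ : ∀ n, cfQ lam A n ≠ 0) (n : ℕ) :
    dist (cfP lam A n / cfQ lam A n) (cfP lam A (n + 1) / cfQ lam A (n + 1)) =
      1 / (|cfQ lam A n| * |cfQ lam A (n + 1)|) := by
  have hdet : cfP lam A n * cfQ lam A (n + 1) - cfQ lam A n * cfP lam A (n + 1) = 1 := by
    linarith [cfP_mul_cfQ_sub lam A n]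
  rw [Real.dist_eq, div_sub_div _ _ (hQ n) (hQ (n + 1)), hdet, abs_div, abs_one, abs_mul]

theorem exists_cfConvergesTo_of_cfQ_growth (hc : c < 1) (hQ : ∀ n, cfQ lam A n ≠ 0)
    (hmono : ∀ n, |cfQ lam A n| ≤ |cfQ lam A (n + 1)|)
    (hgrowth : ∀ n, |cfQ lam A n| ≤ c * |cfQ lam A (n + 2)|) :
    ∃ x, CFConvergesTo lam A x ∧
      ∀ n, |x - cfP lam A n / cfQ lam A n| ≤ 1 / ((1 - c) / 2 * cfQ lam A n ^ 2) := by
  have hpos : ∀ n, 0 < |cfQ lam A n| := fun n => abs_pos.2 (hQ n)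
  have hcontract : ∀ n, 1 / |cfQ lam A (n + 2)| ^ 2 ≤ c * (1 / |cfQ lam A n| ^ 2) := fun n => by
    have hle := mul_le_mul (hgrowth n) ((hmono n).trans (hmono (n + 1))) (hpos n).le
      ((hpos n).le.trans (hgrowth n))
    rw [mul_one_div, div_le_div_iff₀ (pow_pos (hpos _) 2) (pow_pos (hpos _) 2)]
    linarith
  have hanti : ∀ n, 1 / |cfQ lam A (n + 1)| ^ 2 ≤ 1 / |cfQ lam A n| ^ 2 := fun n =>
    one_div_le_one_div_of_le (pow_pos (hpos n) 2) (pow_le_pow_left₀ (abs_nonneg _) (hmono n) 2)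
  have hdist : ∀ n, dist (cfP lam A n / cfQ lam A n) (cfP lam A (n + 1) / cfQ lam A (n + 1)) ≤
      1 / |cfQ lam A n| ^ 2 := fun n => by
    rw [dist_convergents_succ hQ, sq]
    exact one_div_le_one_div_of_le (mul_pos (hpos n) (hpos n))
      (mul_le_mul_of_nonneg_left (hmono n) (abs_nonneg _))
  obtain ⟨x, hx, hxle⟩ := exists_tendsto_dist_le_of_add_two_le_mul hc hcontract hdist
  refine ⟨x, ⟨hQ, hx⟩, fun n => ?_⟩
  have hc' : 0 < 1 - c := sub_pos.2 hc
  calc |x - cfP lam A n / cfQ lam A n|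
      ≤ (1 / |cfQ lam A n| ^ 2 + 1 / |cfQ lam A (n + 1)| ^ 2) / (1 - c) := by
        rw [← Real.dist_eq, dist_comm]; exact hxle n
    _ ≤ (1 / |cfQ lam A n| ^ 2 + 1 / |cfQ lam A n| ^ 2) / (1 - c) := by
        gcongr ?_ / _
        linarith [hanti n]
    _ = 1 / ((1 - c) / 2 * cfQ lam A n ^ 2) := by
        have := hQ n
        rw [sq_abs]; field_simp; ring

end Convergence

section Ratio

variable {lam : ℝ} {A : ℕ → ℤ} {n : ℕ}

/-- The ratio `q_{n-1} / q_n` of consecutive denominators, with `q_{-1} = 0`. -/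
noncomputable def cfRatio (lam : ℝ) (A : ℕ → ℤ) : ℕ → ℝ
  | 0 => 0
  | n + 1 => cfQ lam A n / cfQ lam A (n + 1)

theorem cfQ_succ (hn : cfQ lam A n ≠ 0) :
    cfQ lam A (n + 1) = (A (n + 1) * lam - cfRatio lam A n) * cfQ lam A n := by
  cases n with
  | zero => simp only [cfQ, cfRatio, sub_zero, mul_one]
  | succ n => rw [cfQ, cfRatio, sub_mul, div_mul_cancel₀ _ hn]

theorem cfRatio_succ (hn : cfQ lam A n ≠ 0) :
    cfRatio lam A (n + 1) = (A (n + 1) * lam - cfRatio lam A n)⁻¹ := by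
  rw [cfRatio, cfQ_succ hn, div_mul_cancel_right₀ hn]

end Ratio

section SinRatio

variable {q : ℕ} {u : ℝ}

/-- The function `sin (uπ/q) / sin ((u+1)π/q)`. The map `r ↦ 1 / (λ_q - r)`, which a digit `1`
applies to the ratio `q_{n-1} / q_n`, is elliptic of order `q`, and this function parametrizes its
orbits so that it becomes the shift `u ↦ u + 1`. -/
noncomputable def sinRatio (q : ℕ) (u : ℝ) : ℝ :=
  Real.sin (u * (Real.pi / q)) / Real.sin ((u + 1) * (Real.pi / q))

theorem sin_mul_pi_div_pos (h0 : 0 < u) (hu : u < q) : 0 < Real.sin (u * (Real.pi / q)) := by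
  have hq : (0 : ℝ) < q := h0.trans hu
  refine Real.sin_pos_of_pos_of_lt_pi (mul_pos h0 (div_pos Real.pi_pos hq)) ?_
  calc u * (Real.pi / q) < q * (Real.pi / q) :=
        mul_lt_mul_of_pos_right hu (div_pos Real.pi_pos hq)
    _ = Real.pi := mul_div_cancel₀ _ hq.ne'

theorem strictMonoOn_sinRatio (hq : 1 < q) :
    StrictMonoOn (sinRatio q) (Set.Ioo (-1) (q - 1)) := by
  rintro u ⟨hu, -⟩ v ⟨-, hv⟩ huv
  have hsub : Real.sin (v * (Real.pi / q)) * Real.sin ((u + 1) * (Real.pi / q)) -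
      Real.sin (u * (Real.pi / q)) * Real.sin ((v + 1) * (Real.pi / q)) =
        Real.sin ((v - u) * (Real.pi / q)) * Real.sin (1 * (Real.pi / q)) := by
    simp only [add_mul, sub_mul, one_mul, Real.sin_add, Real.sin_sub]
    ring
  have hpos : 0 < Real.sin ((v - u) * (Real.pi / q)) * Real.sin (1 * (Real.pi / q)) :=
    mul_pos (sin_mul_pi_div_pos (by linarith) (by linarith))
      (sin_mul_pi_div_pos one_pos (by exact_mod_cast hq))
  rw [sinRatio, sinRatio, div_lt_div_iff₀ (sin_mul_pi_div_pos (by linarith) (by linarith))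
    (sin_mul_pi_div_pos (by linarith) (by linarith))]
  linarith

theorem sinRatio_add_one (h0 : -1 < u) (hu : u + 1 < q) :
    sinRatio q (u + 1) = (lamq q - sinRatio q u)⁻¹ := by
  have hsin : Real.sin ((u + 1 + 1) * (Real.pi / q)) =
      lamq q * Real.sin ((u + 1) * (Real.pi / q)) - Real.sin (u * (Real.pi / q)) := by
    simp only [lamq, add_mul, one_mul, Real.sin_add, Real.cos_add]
    linear_combination (-Real.sin (u * (Real.pi / q))) * Real.sin_sq_add_cos_sq (Real.pi / q)
  have hne := (sin_mul_pi_div_pos (u := u + 1) (by linarith) hu).ne'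
  rw [sinRatio, sinRatio, hsin, sub_div' hne, inv_div]

theorem sinRatio_one (hq : 1 < q) : sinRatio q 1 = (lamq q)⁻¹ := by
  have h := sinRatio_add_one (q := q) (u := 0) (by norm_num) (by simpa using hq)
  have hzero : sinRatio q 0 = 0 := by rw [sinRatio, zero_mul, Real.sin_zero, zero_div]
  rwa [hzero, zero_add, sub_zero] at h

theorem sinRatio_one_half (hq : 0 < q) : sinRatio q (1 / 2) = (lamq q + 1)⁻¹ := by
  have hq' : (1 : ℝ) ≤ q := by exact_mod_cast hq
  have hneg : sinRatio q (-1 / 2) = -1 := by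
    have hne := (sin_mul_pi_div_pos (q := q) (u := 1 / 2) (by norm_num) (by linarith)).ne'
    rw [sinRatio, neg_div, neg_mul, Real.sin_neg, show (-(1 / 2) + 1 : ℝ) = 1 / 2 by norm_num,
      neg_div, div_self hne]
  have h := sinRatio_add_one (q := q) (u := -1 / 2) (by norm_num) (by linarith)
  rwa [hneg, sub_neg_eq_add, show (-1 / 2 + 1 : ℝ) = 1 / 2 by norm_num] at h

theorem sinRatio_div_two_sub_half (hq : 1 < q) : sinRatio q (q / 2 - 1 / 2) = 1 := by
  have hq' : (1 : ℝ) < q := by exact_mod_cast hq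
  have hne := (sin_mul_pi_div_pos (q := q) (u := q / 2 - 1 / 2 + 1) (by linarith)
    (by linarith)).ne'
  have hreflect : ((q : ℝ) / 2 - 1 / 2) * (Real.pi / q) =
      Real.pi - (q / 2 - 1 / 2 + 1) * (Real.pi / q) := by
    field_simp
    ring
  rw [sinRatio, hreflect, Real.sin_pi_sub, div_self hne]

theorem sinRatio_div_two_sub_one (hq : 0 < q) : sinRatio q (q / 2 - 1) = lamq q / 2 := by
  have hangle : (q : ℝ) / 2 * (Real.pi / q) = Real.pi / 2 := by field_simp
  rw [sinRatio, sub_add_cancel, sub_mul, one_mul, hangle, Real.sin_pi_div_two_sub,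
    Real.sin_pi_div_two, div_one, lamq, mul_div_cancel_left₀ _ two_ne_zero]

theorem sinRatio_div_two_sub_three_halves (hq : 1 < q) :
    sinRatio q (q / 2 - 3 / 2) = lamq q - 1 := by
  have hq' : (1 : ℝ) < q := by exact_mod_cast hq
  have h := sinRatio_add_one (q := q) (u := q / 2 - 3 / 2) (by linarith) (by linarith)
  rw [show (q : ℝ) / 2 - 3 / 2 + 1 = q / 2 - 1 / 2 by ring, sinRatio_div_two_sub_half hq, eq_comm,
    inv_eq_one] at h
  linarith

theorem one_le_lamq (hq : 3 ≤ q) : 1 ≤ lamq q := by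
  have hcos : Real.cos (Real.pi / 3) ≤ Real.cos (Real.pi / q) :=
    Real.cos_le_cos_of_nonneg_of_le_pi (by positivity) (by linarith [Real.pi_pos])
      (div_le_div_of_nonneg_left Real.pi_pos.le (by norm_num) (by exact_mod_cast hq))
  rw [Real.cos_pi_div_three] at hcos
  rw [lamq]
  linarith

theorem lamq_lt_two (hq : 1 ≤ q) : lamq q < 2 := by
  have hcos : Real.cos (Real.pi / q) < Real.cos 0 :=
    Real.cos_lt_cos_of_nonneg_of_le_pi le_rfl
      (div_le_self Real.pi_pos.le (by exact_mod_cast hq)) (by positivity)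
  rw [Real.cos_zero] at hcos
  rw [lamq]
  linarith

end SinRatio

section Blocks

variable {b : ℕ → ℤ} {i : ℕ} {L : List ℤ}

/-- The digits `b 0, …, b (i - 1)` end with the block `L`. -/
def EndsWithBlock (b : ℕ → ℤ) (i : ℕ) (L : List ℤ) : Prop :=
  ∃ l len : ℕ, i = l + len ∧ L = List.ofFn fun j : Fin len => b (l + j)

theorem EndsWithBlock.nil (b : ℕ → ℤ) (i : ℕ) : EndsWithBlock b i [] := ⟨i, 0, rfl, rfl⟩

theorem EndsWithBlock.append_singleton (h : EndsWithBlock b i L) :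
    EndsWithBlock b (i + 1) (L ++ [b i]) := by
  obtain ⟨l, len, rfl, rfl⟩ := h
  refine ⟨l, len + 1, rfl, ?_⟩
  rw [List.ofFn_succ_last]
  rfl

theorem RegularSeq.not_isForbidden {q : ℕ} (hb : RegularSeq q b) (h : EndsWithBlock b i L) :
    ¬ IsForbidden q L := by
  obtain ⟨l, len, -, rfl⟩ := h
  exact hb l len

theorem cast_hQ_of_even {q : ℕ} (hq : 2 ≤ q) (heven : Even q) : (hQ q : ℝ) = q / 2 - 1 := by
  have h : 2 * hQ q + 2 = q := by
    rw [hQ, if_pos heven]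
    obtain ⟨r, rfl⟩ := heven
    omega
  have : 2 * (hQ q : ℝ) + 2 = q := by exact_mod_cast h
  linarith

theorem cast_hQ_of_not_even {q : ℕ} (hq : 3 ≤ q) (hodd : ¬ Even q) :
    (hQ q : ℝ) = q / 2 - 3 / 2 := by
  have h : 2 * hQ q + 3 = q := by
    rw [hQ, if_neg hodd]
    obtain ⟨r, rfl⟩ := Nat.not_even_iff_odd.1 hodd
    omega
  have : 2 * (hQ q : ℝ) + 3 = q := by exact_mod_cast h
  linarith

theorem cast_hQ_le {q : ℕ} (hq : 3 ≤ q) : (hQ q : ℝ) ≤ q / 2 - 1 := by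
  by_cases heven : Even q
  · exact (cast_hQ_of_even (by omega) heven).le
  · linarith [cast_hQ_of_not_even hq heven]

end Blocks

/-- The levels `u` for which the digits before position `i` force `ε * r ≤ sinRatio q u`, where `r`
is the current ratio of denominators: `k + 1/2` after `k` digits `ε` and, for odd `q`, `k + 1` after
the block `ε^{h_q}, 2ε, ε^k`. A digit `ε` raises the level by one, and no digit of sign `ε` may
follow at the top level `q/2 - 1/2`, where `sinRatio q` is `1`. -/
inductive IsLevel (q : ℕ) (b : ℕ → ℤ) (ε : ℤ) (i : ℕ) : ℝ → Prop
  | ones (k : ℕ) (hk : k ≤ hQ q) (hblock : EndsWithBlock b i (List.replicate k ε)) :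
      IsLevel q b ε i (k + 1 / 2)
  | onesTwoOnes (k : ℕ) (hk : k ≤ hQ q) (hodd : ¬ Even q)
      (hblock : EndsWithBlock b i (List.replicate (hQ q) ε ++ ε * 2 :: List.replicate k ε)) :
      IsLevel q b ε i (k + 1)

namespace IsLevel

variable {q : ℕ} {b : ℕ → ℤ} {ε d : ℤ} {i : ℕ} {u : ℝ}

theorem half (q : ℕ) (b : ℕ → ℤ) (ε : ℤ) (i : ℕ) : IsLevel q b ε i (1 / 2) := by
  simpa using ones (q := q) 0 (Nat.zero_le _) (EndsWithBlock.nil b i)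

theorem half_le (hu : IsLevel q b ε i u) : 1 / 2 ≤ u := by
  cases hu <;> linarith [Nat.cast_nonneg (α := ℝ) ‹ℕ›]

theorem le_div_two_sub_half (hq : 3 ≤ q) (hu : IsLevel q b ε i u) : u ≤ q / 2 - 1 / 2 := by
  cases hu with
  | ones k hk => linarith [cast_hQ_le hq, Nat.cast_le (α := ℝ).2 hk]
  | onesTwoOnes k hk hodd => linarith [cast_hQ_of_not_even hq hodd, Nat.cast_le (α := ℝ).2 hk]

theorem mem_Ioo (hq : 3 ≤ q) (hu : IsLevel q b ε i u) : u ∈ Set.Ioo (-1 : ℝ) (q - 1) := by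
  have hq' : (3 : ℝ) ≤ q := by exact_mod_cast hq
  constructor <;> linarith [hu.half_le, hu.le_div_two_sub_half hq]

theorem le_or_block_ones (hq : 3 ≤ q) (hε : ε = 1 ∨ ε = -1) (hb : RegularSeq q b)
    (hu : IsLevel q b ε i u) (hd : 1 ≤ d) (hi : b i = ε * d) :
    u ≤ q / 2 - 3 / 2 ∨
      ¬ Even q ∧ u = q / 2 - 1 ∧ EndsWithBlock b i (List.replicate (hQ q) ε) := by
  have hle_of_lt : ∀ k : ℕ, k < hQ q → (k : ℝ) + 1 ≤ hQ q := fun k hk => by exact_mod_cast hk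
  cases hu with
  | ones k hk hblock =>
    rcases hk.lt_or_eq with hlt | rfl
    · exact Or.inl (by linarith [cast_hQ_le hq, hle_of_lt k hlt])
    by_cases heven : Even q
    · refine absurd ⟨ε, hε, Or.inr ?_⟩ (hb.not_isForbidden hblock.append_singleton)
      rw [if_pos heven, hi]
      exact ⟨d, hd, rfl⟩
    · exact Or.inr ⟨heven, by linarith [cast_hQ_of_not_even hq heven], hblock⟩
  | onesTwoOnes k hk hodd hblock =>
    rcases hk.lt_or_eq with hlt | rfl
    · exact Or.inl (by linarith [cast_hQ_of_not_even hq hodd, hle_of_lt k hlt])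
    · refine absurd ⟨ε, hε, Or.inr ?_⟩ (hb.not_isForbidden hblock.append_singleton)
      rw [if_neg hodd, hi]
      exact ⟨d, hd, by rw [List.append_assoc, List.cons_append]⟩

theorem le_div_two_sub_one (hq : 3 ≤ q) (hε : ε = 1 ∨ ε = -1) (hb : RegularSeq q b)
    (hu : IsLevel q b ε i u) (hd : 1 ≤ d) (hi : b i = ε * d) : u ≤ q / 2 - 1 := by
  rcases hu.le_or_block_ones hq hε hb hd hi with h | ⟨-, h, -⟩ <;> linarith

theorem add_one (hε : ε = 1 ∨ ε = -1) (hb : RegularSeq q b) (hu : IsLevel q b ε i u)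
    (hi : b i = ε) : IsLevel q b ε (i + 1) (u + 1) := by
  cases hu with
  | ones k hk hblock =>
    have hblock' := hblock.append_singleton
    rw [hi, ← List.replicate_succ'] at hblock'
    have hlt : k ≠ hQ q := by
      rintro rfl
      exact hb.not_isForbidden hblock' ⟨ε, hε, Or.inl rfl⟩
    convert ones (q := q) (k + 1) (by omega) hblock' using 1
    push_cast
    ring
  | onesTwoOnes k hk hodd hblock =>
    have hblock' := hblock.append_singleton
    rw [hi, List.append_assoc, List.cons_append] at hblock'
    have hlt : k ≠ hQ q := by
      rintro rfl
      refine hb.not_isForbidden hblock' ⟨ε, hε, Or.inr ?_⟩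
      rw [if_neg hodd]
      exact ⟨1, le_rfl, by rw [mul_one]⟩
    rw [← List.replicate_succ'] at hblock'
    convert onesTwoOnes (q := q) (k + 1) (by omega) hodd hblock' using 1
    push_cast
    ring

theorem one_of_block_ones (hodd : ¬ Even q) (hblock : EndsWithBlock b i (List.replicate (hQ q) ε))
    (hi : b i = ε * 2) : IsLevel q b ε (i + 1) 1 := by
  have hblock' := hblock.append_singleton
  rw [hi] at hblock'
  simpa using onesTwoOnes 0 (Nat.zero_le _) hodd hblock'

theorem sinRatio_le_sinRatio (hq : 3 ≤ q) (hu : IsLevel q b ε i u) {v : ℝ} (huv : u ≤ v)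
    (hv : v ≤ q / 2 - 1 / 2) : sinRatio q u ≤ sinRatio q v := by
  have hq' : (3 : ℝ) ≤ q := by exact_mod_cast hq
  exact (strictMonoOn_sinRatio (by omega)).monotoneOn (hu.mem_Ioo hq)
    ⟨(hu.mem_Ioo hq).1.trans_le huv, by linarith⟩ huv

theorem sinRatio_le_one (hq : 3 ≤ q) (hu : IsLevel q b ε i u) : sinRatio q u ≤ 1 :=
  (hu.sinRatio_le_sinRatio hq (hu.le_div_two_sub_half hq) le_rfl).trans_eq
    (sinRatio_div_two_sub_half (by omega))

theorem sinRatio_le_lamq_sub_one (hq : 3 ≤ q) (hu : IsLevel q b ε i u)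
    (hle : u ≤ q / 2 - 3 / 2) : sinRatio q u ≤ lamq q - 1 :=
  (hu.sinRatio_le_sinRatio hq hle (by linarith)).trans_eq
    (sinRatio_div_two_sub_three_halves (by omega))

theorem sinRatio_le_lamq_div_two (hq : 3 ≤ q) (hu : IsLevel q b ε i u)
    (hle : u ≤ q / 2 - 1) : sinRatio q u ≤ lamq q / 2 :=
  (hu.sinRatio_le_sinRatio hq hle (by linarith)).trans_eq (sinRatio_div_two_sub_one (by omega))

theorem exists_inv_le_of_one (hq : 3 ≤ q) (hε : ε = 1 ∨ ε = -1) (hb : RegularSeq q b)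
    (hu : IsLevel q b ε i u) (hi : b i = ε) {t : ℝ} (ht : t ≤ sinRatio q u) :
    1 ≤ lamq q - t ∧ ∃ v, IsLevel q b ε (i + 1) v ∧ (lamq q - t)⁻¹ ≤ sinRatio q v := by
  have hnext := hu.add_one hε hb hi
  have hle := hu.sinRatio_le_lamq_sub_one hq (by linarith [hnext.le_div_two_sub_half hq])
  refine ⟨by linarith, u + 1, hnext, ?_⟩
  obtain ⟨hlt, hgt⟩ := hu.mem_Ioo hq
  rw [sinRatio_add_one hlt (by linarith)]
  exact inv_anti₀ (by linarith) (by linarith)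

theorem exists_inv_le_of_two_le (hq : 3 ≤ q) (hε : ε = 1 ∨ ε = -1) (hb : RegularSeq q b)
    (hu : IsLevel q b ε i u) (hd : 2 ≤ d) (hi : b i = ε * d) {t : ℝ} (ht : t ≤ sinRatio q u) :
    1 ≤ d * lamq q - t ∧
      ∃ v, IsLevel q b ε (i + 1) v ∧ (d * lamq q - t)⁻¹ ≤ sinRatio q v := by
  have hlam := one_le_lamq hq
  have hmul : ∀ m : ℤ, m ≤ d → (m : ℝ) * lamq q ≤ d * lamq q := fun m hm =>
    mul_le_mul_of_nonneg_right (by exact_mod_cast hm) (by linarith)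
  have htwo : 2 * lamq q ≤ d * lamq q := by exact_mod_cast hmul 2 hd
  have ht1 : t ≤ 1 := ht.trans (hu.sinRatio_le_one hq)
  refine ⟨by linarith, ?_⟩
  have hreset (hle : lamq q + 1 ≤ d * lamq q - t) :
      ∃ v, IsLevel q b ε (i + 1) v ∧ (d * lamq q - t)⁻¹ ≤ sinRatio q v := by
    refine ⟨1 / 2, half q b ε (i + 1), ?_⟩
    rw [sinRatio_one_half (by omega)]
    exact inv_anti₀ (by linarith) hle
  rcases hu.le_or_block_ones hq hε hb (by omega) hi with hle | ⟨hodd, -, hblock⟩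
  · exact hreset (by linarith [hu.sinRatio_le_lamq_sub_one hq hle])
  rcases hd.eq_or_lt with rfl | hd3
  · refine ⟨1, one_of_block_ones hodd hblock hi, ?_⟩
    rw [sinRatio_one (by omega)]
    exact inv_anti₀ (by linarith) (by linarith)
  · have hthree : 3 * lamq q ≤ d * lamq q := by exact_mod_cast hmul 3 (by omega)
    exact hreset (by linarith)

theorem exists_inv_le (hq : 3 ≤ q) (hε : ε = 1 ∨ ε = -1) (hb : RegularSeq q b)
    (hu : IsLevel q b ε i u) (hd : 1 ≤ d) (hi : b i = ε * d) {t : ℝ} (ht : t ≤ sinRatio q u) :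
    1 ≤ d * lamq q - t ∧
      ∃ v, IsLevel q b ε (i + 1) v ∧ (d * lamq q - t)⁻¹ ≤ sinRatio q v := by
  rcases hd.eq_or_lt with rfl | hd2
  · simpa using hu.exists_inv_le_of_one hq hε hb (by rw [hi, mul_one]) ht
  · exact hu.exists_inv_le_of_two_le hq hε hb hd2 hi ht

theorem exists_le_of_nonpos (hq : 3 ≤ q) (b : ℕ → ℤ) (ε : ℤ) (i : ℕ) {t : ℝ} (ht : t ≤ 0) :
    ∃ u, IsLevel q b ε i u ∧ t ≤ sinRatio q u := by
  refine ⟨1 / 2, half q b ε i, ht.trans ?_⟩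
  rw [sinRatio_one_half (by omega)]
  exact inv_nonneg.2 (by linarith [one_le_lamq hq])

end IsLevel

/-- The invariant of the ratios `r = q_{i-1} / q_i` of a regular continued fraction: for both signs
`ε`, `ε * r` is at most `sinRatio q u` for some level `u` of the digits read so far. -/
def RatioBound (q : ℕ) (b : ℕ → ℤ) (i : ℕ) (r : ℝ) : Prop :=
  ∀ ε : ℤ, (ε = 1 ∨ ε = -1) → ∃ u, IsLevel q b ε i u ∧ ε * r ≤ sinRatio q u

namespace RatioBound

variable {q : ℕ} {b : ℕ → ℤ} {i : ℕ} {r : ℝ}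

theorem abs_le_one (hq : 3 ≤ q) (hr : RatioBound q b i r) : |r| ≤ 1 := by
  obtain ⟨u, hu, hru⟩ := hr 1 (Or.inl rfl)
  obtain ⟨v, hv, hrv⟩ := hr (-1) (Or.inr rfl)
  push_cast at hru hrv
  exact abs_le.2 ⟨by linarith [hv.sinRatio_le_one hq], by linarith [hu.sinRatio_le_one hq]⟩

theorem growth_and_succ_of_eq_mul (hq : 3 ≤ q) (hb : RegularSeq q b) (hr : RatioBound q b i r)
    {ε d : ℤ} (hε : ε = 1 ∨ ε = -1) (hd : 1 ≤ d) (hi : b i = ε * d) :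
    1 ≤ d * lamq q - ε * r ∧ |r| ≤ lamq q / 2 * (d * lamq q - ε * r) ∧
      RatioBound q b (i + 1) (ε * (d * lamq q - ε * r)⁻¹) := by
  obtain ⟨u, hu, hru⟩ := hr ε hε
  obtain ⟨hone, v, hv, hinv⟩ := hu.exists_inv_le hq hε hb hd hi hru
  have hlam := one_le_lamq hq
  have hinv_pos : 0 < (d * lamq q - ε * r)⁻¹ := inv_pos.2 (by linarith)
  have hsq : (ε : ℝ) * ε = 1 := by rcases hε with rfl | rfl <;> norm_num
  have habs : |r| = |ε * r| := by rcases hε with rfl | rfl <;> simp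
  have habs_le := hr.abs_le_one hq
  refine ⟨hone, ?_, fun ε' hε' => ?_⟩
  · rcases le_total 0 ((ε : ℝ) * r) with hnonneg | hnonpos
    · have hle := hu.sinRatio_le_lamq_div_two hq (hu.le_div_two_sub_one hq hε hb hd hi)
      rw [habs, abs_of_nonneg hnonneg]
      exact (hru.trans hle).trans (le_mul_of_one_le_right (by linarith) hone)
    · have hd' : (1 : ℝ) ≤ d := by exact_mod_cast hd
      rw [habs, abs_of_nonpos hnonpos] at habs_le ⊢
      nlinarith
  · obtain rfl | rfl : ε' = ε ∨ ε' = -ε := by omega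
    · exact ⟨v, hv, by rwa [← mul_assoc, hsq, one_mul]⟩
    · refine IsLevel.exists_le_of_nonpos hq b _ (i + 1) ?_
      rw [Int.cast_neg, neg_mul, ← mul_assoc, hsq, one_mul]
      linarith

theorem growth_and_succ (hq : 3 ≤ q) (hb : RegularSeq q b) (hr : RatioBound q b i r)
    (hi : b i ≠ 0) :
    1 ≤ |b i * lamq q - r| ∧ |r| ≤ lamq q / 2 * |b i * lamq q - r| ∧
      RatioBound q b (i + 1) (b i * lamq q - r)⁻¹ := by
  obtain ⟨ε, d, hε, hd, hdigit⟩ : ∃ ε d : ℤ, (ε = 1 ∨ ε = -1) ∧ 1 ≤ d ∧ b i = ε * d :=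
    ⟨(b i).sign, |b i|, hi.lt_or_gt.symm.imp Int.sign_eq_one_of_pos Int.sign_eq_neg_one_of_neg,
      Int.one_le_abs hi, (Int.sign_mul_abs _).symm⟩
  obtain ⟨hone, hcontract, hnext⟩ := hr.growth_and_succ_of_eq_mul hq hb hε hd hdigit
  have hsq : (ε : ℝ) * ε = 1 := by rcases hε with rfl | rfl <;> norm_num
  have habs : |(ε : ℝ)| = 1 := by rcases hε with rfl | rfl <;> norm_num
  have hfactor : (b i : ℝ) * lamq q - r = ε * (d * lamq q - ε * r) := by
    rw [hdigit, Int.cast_mul]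
    linear_combination r * hsq
  rw [hfactor, abs_mul, habs, one_mul, abs_of_pos (one_pos.trans_le hone), mul_inv,
    inv_eq_of_mul_eq_one_left hsq]
  exact ⟨hone, hcontract, hnext⟩

end RatioBound

section Growth

variable {q : ℕ} {A : ℕ → ℤ}

theorem cfQ_ne_zero_and_ratioBound (hq : 3 ≤ q) (hA : ∀ i, A (i + 1) ≠ 0)
    (hreg : RegularSeq q fun i => A (i + 1)) (n : ℕ) :
    cfQ (lamq q) A n ≠ 0 ∧ RatioBound q (fun i => A (i + 1)) n (cfRatio (lamq q) A n) := by
  induction n with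
  | zero =>
    exact ⟨one_ne_zero, fun ε _ => IsLevel.exists_le_of_nonpos hq _ ε 0 (mul_zero _).le⟩
  | succ n ih =>
    obtain ⟨hQ, hratio⟩ := ih
    obtain ⟨hone, -, hnext⟩ := hratio.growth_and_succ hq hreg (hA n)
    rw [cfRatio_succ hQ, cfQ_succ hQ]
    exact ⟨mul_ne_zero (abs_pos.1 (one_pos.trans_le hone)) hQ, hnext⟩

theorem abs_cfQ_le_succ (hq : 3 ≤ q) (hA : ∀ i, A (i + 1) ≠ 0)
    (hreg : RegularSeq q fun i => A (i + 1)) (n : ℕ) :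
    |cfQ (lamq q) A n| ≤ |cfQ (lamq q) A (n + 1)| := by
  obtain ⟨hQ, hratio⟩ := cfQ_ne_zero_and_ratioBound hq hA hreg n
  rw [cfQ_succ hQ, abs_mul]
  exact le_mul_of_one_le_left (abs_nonneg _) (hratio.growth_and_succ hq hreg (hA n)).1

theorem abs_cfQ_le_mul_add_two (hq : 3 ≤ q) (hA : ∀ i, A (i + 1) ≠ 0)
    (hreg : RegularSeq q fun i => A (i + 1)) (n : ℕ) :
    |cfQ (lamq q) A n| ≤ lamq q / 2 * |cfQ (lamq q) A (n + 2)| := by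
  obtain ⟨hQ, hratio⟩ := cfQ_ne_zero_and_ratioBound hq hA hreg (n + 1)
  have hratio_mul : cfQ (lamq q) A n = cfRatio (lamq q) A (n + 1) * cfQ (lamq q) A (n + 1) := by
    rw [cfRatio, div_mul_cancel₀ _ hQ]
  rw [cfQ_succ hQ, hratio_mul, abs_mul, abs_mul, ← mul_assoc]
  exact mul_le_mul_of_nonneg_right (hratio.growth_and_succ hq hreg (hA (n + 1))).2.1 (abs_nonneg _)

end Growth

/-- Approximation quality: for each `q ≥ 3` there is `κ > 0` such that for every infinite
regular `λ_q`-CF with value `x`, `|x - p_n/q_n| ≤ 1/(κ·q_n²)` holds for all `n`. -/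
theorem stmt19 (q : ℕ) (hq : 3 ≤ q) :
    ∃ κ : ℝ, 0 < κ ∧
      ∀ A : ℕ → ℤ, (∀ i, A (i + 1) ≠ 0) → RegularSeq q (fun i => A (i + 1)) →
        ∃ x : ℝ, CFConvergesTo (lamq q) A x ∧
          ∀ n, |x - cfP (lamq q) A n / cfQ (lamq q) A n| ≤
            1 / (κ * (cfQ (lamq q) A n) ^ 2) := by
  have hlam : lamq q / 2 < 1 := by linarith [lamq_lt_two (q := q) (by omega)]
  refine ⟨(1 - lamq q / 2) / 2, by linarith, fun A hA hreg => ?_⟩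
  exact exists_cfConvergesTo_of_cfQ_growth hlam
    (fun n => (cfQ_ne_zero_and_ratioBound hq hA hreg n).1)
    (abs_cfQ_le_succ hq hA hreg) (abs_cfQ_le_mul_add_two hq hA hreg)
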